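/- Let E1, E2 ∈ ℝ^{N×N} be symmetric positive definite matrices and e1, e2 ∈ ℝ^N. Then the ellipsoids 𝓔(E1, e1) and 𝓔(E2, e2) are disjoint if and only if there exist λ ∈ ℝ^N and μ ∈ ℝ such that sqrt(λᵀ E1⁻¹ λ) + λᵀ e1 < μ and λᵀ e2 − sqrt(λᵀ E2⁻¹ λ) > μ (these conditions force λ ≠ 0). -/

import Mathlib

open Matrix

/-!
The linear form `lam ⬝ᵥ ·` takes on the ellipsoid `{s | (s - e)ᵀ E (s - e) ≤ 1}` the maximum
`√(lamᵀ E⁻¹ lam) + lamᵀ e` and the minimum `lamᵀ e - √(lamᵀ E⁻¹ lam)`: the bounds are the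
Cauchy–Schwarz inequality for the inner product defined by `E`, with equality in the direction
`E⁻¹ lam`. Hence the two inequalities of the theorem say that the hyperplane `lam ⬝ᵥ s = μ` strictly
separates the two ellipsoids. As these are compact and convex, the Hahn–Banach theorem provides
such a hyperplane as soon as they are disjoint.
-/

section

variable {ι : Type*} [Fintype ι]

theorem disjoint_iff_exists_dotProduct_lt_lt {s t : Set (ι → ℝ)} (hs : Convex ℝ s)
    (hs' : IsCompact s) (ht : Convex ℝ t) (ht' : IsClosed t) :
    Disjoint s t ↔
      ∃ (lam : ι → ℝ) (μ : ℝ), (∀ x ∈ s, lam ⬝ᵥ x < μ) ∧ ∀ y ∈ t, μ < lam ⬝ᵥ y := by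
  classical
  constructor
  · intro hst
    obtain ⟨f, u, v, hfs, huv, hft⟩ := geometric_hahn_banach_compact_closed hs hs' ht ht' hst
    obtain ⟨lam, hlam⟩ := (dotProductEquiv ℝ ι).surjective f.toLinearMap
    have hf (x : ι → ℝ) : lam ⬝ᵥ x = f x := LinearMap.congr_fun hlam x
    exact ⟨lam, u, fun x hx => hf x ▸ hfs x hx, fun y hy => hf y ▸ huv.trans (hft y hy)⟩
  · rintro ⟨lam, μ, hs_lt, ht_gt⟩
    exact Set.disjoint_left.2 fun x hxs hxt => (hs_lt x hxs).asymm (ht_gt x hxt)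

theorem mulVec_nonsing_inv_mulVec {R : Type*} [CommRing R] [DecidableEq ι] {A : Matrix ι ι R}
    (hA : IsUnit A.det) (v : ι → R) : A *ᵥ A⁻¹ *ᵥ v = v := by
  rw [mulVec_mulVec, mul_nonsing_inv A hA, one_mulVec]

variable {E : Matrix ι ι ℝ}

theorem dotProduct_mulVec_self_nonneg (hE : E.PosSemidef) (x : ι → ℝ) : 0 ≤ x ⬝ᵥ E *ᵥ x :=
  star_trivial x ▸ hE.dotProduct_mulVec_nonneg x

theorem dotProduct_mulVec_sq_le (hE : E.PosSemidef) (x y : ι → ℝ) :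
    (x ⬝ᵥ E *ᵥ y) ^ 2 ≤ (x ⬝ᵥ E *ᵥ x) * (y ⬝ᵥ E *ᵥ y) := by
  classical
  have hnonneg (z : ι → ℝ) : 0 ≤ E.toBilin' z z := by
    rw [toBilin'_apply']
    exact dotProduct_mulVec_self_nonneg hE z
  have hsymm : E.toBilin'.IsSymm :=
    isSymm_toBilin'_iff_isSymm.2 (isHermitian_iff_isSymm.1 hE.isHermitian)
  simpa only [toBilin'_apply'] using E.toBilin'.apply_sq_le_of_symm hnonneg
    (LinearMap.BilinForm.isSymm_iff.1 hsymm) x y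

theorem convexOn_dotProduct_mulVec_self (hE : E.PosSemidef) :
    ConvexOn ℝ Set.univ fun x : ι → ℝ => x ⬝ᵥ E *ᵥ x := by
  refine ⟨convex_univ, fun x _ y _ a b ha hb hab => ?_⟩
  obtain rfl : b = 1 - a := by linarith
  have hdefect : a * (x ⬝ᵥ E *ᵥ x) + (1 - a) * (y ⬝ᵥ E *ᵥ y)
      - (a • x + (1 - a) • y) ⬝ᵥ E *ᵥ (a • x + (1 - a) • y)
        = a * (1 - a) * ((x - y) ⬝ᵥ E *ᵥ (x - y)) := by
    simp only [mulVec_add, mulVec_sub, mulVec_smul, add_dotProduct, sub_dotProduct,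
      dotProduct_add, dotProduct_sub, smul_dotProduct, dotProduct_smul, smul_eq_mul]
    ring
  exact sub_nonneg.1 <| hdefect.ge.trans' <|
    mul_nonneg (mul_nonneg ha hb) (dotProduct_mulVec_self_nonneg hE (x - y))

/-- The ellipsoid `𝓔(E, e)` with centre `e` and shape matrix `E`. Positive definiteness of `E`
is not built into the definition. -/
def ellipsoid (E : Matrix ι ι ℝ) (e : ι → ℝ) : Set (ι → ℝ) :=
  {s | (s - e) ⬝ᵥ E *ᵥ (s - e) ≤ 1}

theorem isClosed_ellipsoid (E : Matrix ι ι ℝ) (e : ι → ℝ) : IsClosed (ellipsoid E e) :=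
  isClosed_le (by fun_prop) continuous_const

theorem convex_ellipsoid (hE : E.PosSemidef) (e : ι → ℝ) : Convex ℝ (ellipsoid E e) := by
  have h := ((convexOn_dotProduct_mulVec_self hE).translate_left (-e)).convex_le 1
  simpa [ellipsoid, sub_eq_add_neg] using h

theorem dotProduct_sq_le_mul_inv [DecidableEq ι] (hE : E.PosDef) (lam x : ι → ℝ) :
    (lam ⬝ᵥ x) ^ 2 ≤ (lam ⬝ᵥ E⁻¹ *ᵥ lam) * (x ⬝ᵥ E *ᵥ x) := by
  have h := dotProduct_mulVec_sq_le hE.posSemidef x (E⁻¹ *ᵥ lam)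
  rwa [mulVec_nonsing_inv_mulVec hE.det_pos.ne'.isUnit, dotProduct_comm x lam,
    dotProduct_comm _ lam, mul_comm] at h

theorem isGreatest_dotProduct_image_ellipsoid [DecidableEq ι] (hE : E.PosDef) (e lam : ι → ℝ) :
    IsGreatest ((lam ⬝ᵥ ·) '' ellipsoid E e) (√(lam ⬝ᵥ E⁻¹ *ᵥ lam) + lam ⬝ᵥ e) := by
  have hq : 0 ≤ lam ⬝ᵥ E⁻¹ *ᵥ lam := dotProduct_mulVec_self_nonneg hE.inv.posSemidef lam
  constructor
  -- For `lam = 0` the scalar `(√0)⁻¹` is `0`, and the maximum is attained at the centre.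
  · refine ⟨(√(lam ⬝ᵥ E⁻¹ *ᵥ lam))⁻¹ • E⁻¹ *ᵥ lam + e, ?_, ?_⟩
    · rw [ellipsoid, Set.mem_ofPred_eq, add_sub_cancel_right, mulVec_smul,
        mulVec_nonsing_inv_mulVec hE.det_pos.ne'.isUnit, smul_dotProduct, dotProduct_smul,
        smul_smul, ← mul_inv, Real.mul_self_sqrt hq, dotProduct_comm, smul_eq_mul]
      exact inv_mul_le_one
    · simp only [dotProduct_add, dotProduct_smul, smul_eq_mul, inv_mul_eq_div, Real.div_sqrt]
  · rintro _ ⟨s, hs, rfl⟩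
    have hsq : (lam ⬝ᵥ (s - e)) ^ 2 ≤ lam ⬝ᵥ E⁻¹ *ᵥ lam :=
      (dotProduct_sq_le_mul_inv hE lam (s - e)).trans (mul_le_of_le_one_right hq hs)
    simpa only [dotProduct_sub, sub_le_iff_le_add] using Real.le_sqrt_of_sq_le hsq

theorem isLeast_dotProduct_image_ellipsoid [DecidableEq ι] (hE : E.PosDef) (e lam : ι → ℝ) :
    IsLeast ((lam ⬝ᵥ ·) '' ellipsoid E e) (lam ⬝ᵥ e - √(lam ⬝ᵥ E⁻¹ *ᵥ lam)) := by
  have h := monotone_id.neg.map_isGreatest (isGreatest_dotProduct_image_ellipsoid hE e (-lam))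
  simpa [Set.image_image, mulVec_neg, sub_eq_add_neg] using h

theorem isBounded_ellipsoid (hE : E.PosDef) (e : ι → ℝ) : Bornology.IsBounded (ellipsoid E e) := by
  classical
  rw [isBounded_iff_bddBelow_bddAbove, bddBelow_pi, bddAbove_pi]
  have heval (i : ι) : Function.eval i = (Pi.single i (1 : ℝ) ⬝ᵥ ·) :=
    funext fun x => (single_one_dotProduct i x).symm
  exact ⟨fun i => heval i ▸ (isLeast_dotProduct_image_ellipsoid hE e _).bddBelow,
    fun i => heval i ▸ (isGreatest_dotProduct_image_ellipsoid hE e _).bddAbove⟩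

theorem isCompact_ellipsoid (hE : E.PosDef) (e : ι → ℝ) : IsCompact (ellipsoid E e) :=
  Metric.isCompact_of_isClosed_isBounded (isClosed_ellipsoid E e) (isBounded_ellipsoid hE e)

theorem stmt_5_general [DecidableEq ι] {E1 E2 : Matrix ι ι ℝ} (hE1 : E1.PosDef)
    (hE2 : E2.PosDef) (e1 e2 : ι → ℝ) :
    Disjoint (ellipsoid E1 e1) (ellipsoid E2 e2) ↔
      ∃ (lam : ι → ℝ) (μ : ℝ),
        √(lam ⬝ᵥ E1⁻¹ *ᵥ lam) + lam ⬝ᵥ e1 < μ ∧ μ < lam ⬝ᵥ e2 - √(lam ⬝ᵥ E2⁻¹ *ᵥ lam) := by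
  rw [disjoint_iff_exists_dotProduct_lt_lt (convex_ellipsoid hE1.posSemidef e1)
    (isCompact_ellipsoid hE1 e1) (convex_ellipsoid hE2.posSemidef e2) (isClosed_ellipsoid E2 e2)]
  simp only [(isGreatest_dotProduct_image_ellipsoid hE1 e1 _).lt_iff,
    (isLeast_dotProduct_image_ellipsoid hE2 e2 _).lt_iff, Set.forall_mem_image]

end

/-- Two ellipsoids `𝓔(E1, e1)` and `𝓔(E2, e2)` are disjoint iff there exist `λ ∈ ℝ^N`
and `μ ∈ ℝ` with `sqrt (λᵀ E1⁻¹ λ) + λᵀ e1 < μ` and `λᵀ e2 - sqrt (λᵀ E2⁻¹ λ) > μ`. -/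
theorem stmt_5 (N : ℕ) (E1 E2 : Matrix (Fin N) (Fin N) ℝ)
    (hE1 : E1.PosDef) (hE2 : E2.PosDef) (e1 e2 : Fin N → ℝ) :
    {s : Fin N → ℝ | (s - e1) ⬝ᵥ E1 *ᵥ (s - e1) ≤ 1} ∩
        {s : Fin N → ℝ | (s - e2) ⬝ᵥ E2 *ᵥ (s - e2) ≤ 1} = ∅ ↔
      ∃ (lam : Fin N → ℝ) (μ : ℝ),
        Real.sqrt (lam ⬝ᵥ E1⁻¹ *ᵥ lam) + lam ⬝ᵥ e1 < μ ∧
        μ < lam ⬝ᵥ e2 - Real.sqrt (lam ⬝ᵥ E2⁻¹ *ᵥ lam) :=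
  Set.disjoint_iff_inter_eq_empty.symm.trans (stmt_5_general hE1 hE2 e1 e2)
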